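/- arXiv:1104.5408 — 3 statements merged into one kernel-verified Lean document; each statement's English description precedes it below -/
import Mathlib

section
/- For every β ∈ [1, β₁] and every ϑ ∈ ℝ one has 0 ≤ ζ(ϑ) ≤ ((β₁/c^c)·ϑ⁺ + 1)^{1/β} − 1 ≤ ((β₁/c^c)·ϑ⁺)^{1/β}, where ϑ⁺ = max(ϑ, 0). -/
open MeasureTheory

/-!
Integrating the growth condition `c s ≥ cc (1 + s)^(β₁ - 1)` over `[0, t]` gives
`(1 + t)^β₁ ≤ (β₁ / cc) g(t) + 1` (`one_add_rpow_le_of_growth`). At `t = ζ ϑ` with `ϑ ≥ 0` the right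
side is `(β₁ / cc) ϑ + 1`; since `1 + t ≥ 1`, the exponent `β₁` may be lowered to `β`, and taking
`β`-th roots yields the middle inequality. The last inequality is the subadditivity of
`x ↦ x^(1/β)`, valid because `0 ≤ 1/β ≤ 1`.
-/

/-- The growth condition on the heat capacity, integrated over `[0, t]`. -/
lemma one_add_rpow_le_of_growth (c : ℝ → ℝ) (cc β₁ : ℝ) (hcc : 0 < cc) (hβ₁ : 2 ≤ β₁)
    (hc_cont : ContinuousOn c (Set.Ici 0))
    (hc_growth : ∀ s, 0 ≤ s → cc * (1 + s) ^ (β₁ - 1) ≤ c s) (t : ℝ) (ht : 0 ≤ t) :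
    (1 + t) ^ β₁ ≤ β₁ / cc * (∫ s in (0:ℝ)..t, c s) + 1 := by
  have hint : ∫ s in (0:ℝ)..t, cc * (1 + s) ^ (β₁ - 1) = cc * (((1 + t) ^ β₁ - 1) / β₁) := by
    rw [intervalIntegral.integral_const_mul,
      intervalIntegral.integral_comp_add_left (fun x : ℝ => x ^ (β₁ - 1)) 1,
      integral_rpow (Or.inl (by linarith))]
    simp
  have hcont : Continuous fun s : ℝ => cc * (1 + s) ^ (β₁ - 1) :=
    continuous_const.mul
      ((continuous_const.add continuous_id).rpow_const fun _ => Or.inr (by linarith))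
  have hci : IntervalIntegrable c volume 0 t := by
    apply ContinuousOn.intervalIntegrable
    rw [Set.uIcc_of_le ht]
    exact hc_cont.mono fun s hs => hs.1
  have hmono := intervalIntegral.integral_mono_on ht (hcont.intervalIntegrable 0 t) hci
    fun s hs => hc_growth s hs.1
  rw [hint] at hmono
  have hβ₁_pos : 0 < β₁ := by linarith
  have hscaled := mul_le_mul_of_nonneg_left hmono (div_pos hβ₁_pos hcc).le
  have hcancel : β₁ / cc * (cc * (((1 + t) ^ β₁ - 1) / β₁)) = (1 + t) ^ β₁ - 1 := by
    field_simp
  linarith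

/-- Bounds for `ζ = g⁻¹ ∘ (·)⁺`: for every `β ∈ [1, β₁]` and every `ϑ ∈ ℝ`,
`0 ≤ ζ(ϑ) ≤ ((β₁/c^c)ϑ⁺ + 1)^{1/β} − 1 ≤ ((β₁/c^c)ϑ⁺)^{1/β}`. -/
theorem stmt_2 (c : ℝ → ℝ) (cc β₁ : ℝ) (hcc : 0 < cc) (hβ₁ : 2 ≤ β₁)
    (hc_cont : ContinuousOn c (Set.Ici 0))
    (hc_growth : ∀ s, 0 ≤ s → cc * (1 + s) ^ (β₁ - 1) ≤ c s)
    (g ζ : ℝ → ℝ) (hg : ∀ θ, g θ = ∫ s in (0:ℝ)..θ, c s)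
    (hg_bij : Set.BijOn g (Set.Ici 0) (Set.Ici 0))
    (hζ_nonneg : ∀ ϑ, 0 ≤ ϑ → 0 ≤ ζ ϑ)
    (hζ_inv : ∀ ϑ, 0 ≤ ϑ → g (ζ ϑ) = ϑ)
    (hζ_neg : ∀ ϑ, ϑ < 0 → ζ ϑ = 0) :
    ∀ β, 1 ≤ β → β ≤ β₁ → ∀ ϑ : ℝ,
      0 ≤ ζ ϑ ∧ ζ ϑ ≤ (β₁ / cc * max ϑ 0 + 1) ^ (1 / β) - 1 ∧
        (β₁ / cc * max ϑ 0 + 1) ^ (1 / β) - 1 ≤ (β₁ / cc * max ϑ 0) ^ (1 / β) := by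
  intro β hβ hββ₁ ϑ
  have hβ_pos : 0 < β := by linarith
  have hx : 0 ≤ β₁ / cc * max ϑ 0 :=
    mul_nonneg (div_nonneg (by linarith) hcc.le) (le_max_right _ _)
  have hζ0 : 0 ≤ ζ ϑ := by
    rcases lt_or_ge ϑ 0 with h | h
    · exact (hζ_neg ϑ h).ge
    · exact hζ_nonneg ϑ h
  refine ⟨hζ0, ?_, ?_⟩
  · have hpow : (1 + ζ ϑ) ^ β ≤ β₁ / cc * max ϑ 0 + 1 := by
      rcases lt_or_ge ϑ 0 with h | h
      · rw [hζ_neg ϑ h, add_zero, Real.one_rpow]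
        linarith
      · have hgrow := one_add_rpow_le_of_growth c cc β₁ hcc hβ₁ hc_cont hc_growth (ζ ϑ) hζ0
        rw [← hg, hζ_inv ϑ h] at hgrow
        rw [max_eq_left h]
        exact (Real.rpow_le_rpow_of_exponent_le (by linarith) hββ₁).trans hgrow
    have hroot : 1 + ζ ϑ ≤ (β₁ / cc * max ϑ 0 + 1) ^ (1 / β) := by
      rw [one_div]
      exact (Real.le_rpow_inv_iff_of_pos (by linarith) (by linarith) hβ_pos).2 hpow
    linarith
  · have hsub := Real.rpow_add_le_add_rpow hx zero_le_one (one_div_nonneg.2 hβ_pos.le)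
      ((div_le_one hβ_pos).2 hβ)
    rw [Real.one_rpow] at hsub
    linarith
end

section
/- Let δ > 0 and c̄₁, c̄₂, c̄₃ > 0 be constants and let E be the real inner product space of trace-free symmetric 3×3 real matrices with the Frobenius inner product. Define H₁^δ : E → ℝ by H₁^δ(z) = c̄₁·√(δ² + ‖z‖²) + c̄₂‖z‖² + ((‖z‖ − c̄₃)₊)⁴ / (δ(1 + ‖z‖²)), where (·)₊ denotes the positive part. Then H₁^δ is twice continuously differentiable, H₁^δ(z) ≥ c̄₂‖z‖² for all z ∈ E, and there exists a constant C > 0 such that ‖D²H₁^δ(z)‖ ≤ C for all z ∈ E. -/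
/-!
In the variable `s = ‖z‖²` the functional is `G(s) = c₁√(δ² + s) + c₂ s + m(s)⁴ / (δ (1 + s))` with
`m(s) = (√s - c₃)₊`. Because `m` vanishes for `s` near `0`, the square root causes no singularity
there, and the fourth power makes the kink at `s = c₃²` twice differentiable; so `G` is `C²` at each
`s ≥ 0`. The Frobenius norm comes from an inner product, hence the Hessian of `z ↦ G(‖z‖²)` is
`2 G'(‖z‖²) ⟪h, k⟫ + 4 G''(‖z‖²) ⟪z, h⟫ ⟪z, k⟫` (`radial_contDiff_two`), and it suffices to bound
`G'(s)` and `s G''(s)`. For the quartic term this follows from `m ≤ √s`, which yields `m⁴ ≤ s²`,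
`(m⁴)' ≤ 2 s`, `|(m⁴)''| ≤ 4` (`quotient_bounds`); the other two terms are elementary
(`sqrt_bounds`).
-/

open Matrix

attribute [local instance] Matrix.frobeniusNormedAddCommGroup Matrix.frobeniusNormedSpace

/-- The real inner product space of trace-free (deviatoric) symmetric 3×3 real matrices,
with the Frobenius norm installed as a local instance on `Matrix (Fin 3) (Fin 3) ℝ`. -/
def devMat3 : Submodule ℝ (Matrix (Fin 3) (Fin 3) ℝ) where
  carrier := {A | A.IsSymm ∧ A.trace = 0}
  add_mem' := fun hA hB => ⟨hA.1.add hB.1, by rw [Matrix.trace_add, hA.2, hB.2, add_zero]⟩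
  zero_mem' := ⟨Matrix.isSymm_zero, by simp⟩
  smul_mem' := fun r A hA => ⟨hA.1.smul r, by rw [Matrix.trace_smul, hA.2, smul_zero]⟩

/-- A function `z ↦ G (‖z‖²)` has second derivative
`2 G'(‖z‖²) ⟪h, k⟫ + 4 G''(‖z‖²) ⟪z, h⟫ ⟪z, k⟫`, so it is `C²` with bounded Hessian as soon as
`G'(s)` and `s G''(s)` are bounded for `s ≥ 0`. -/
theorem radial_contDiff_two {E : Type*} [NormedAddCommGroup E] [InnerProductSpace ℝ E]
    (G g₁ g₂ : ℝ → ℝ) (A B : ℝ)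
    (h₁ : ∀ s, 0 ≤ s → HasDerivAt G (g₁ s) s) (h₂ : ∀ s, 0 ≤ s → HasDerivAt g₁ (g₂ s) s)
    (hc : ∀ s, 0 ≤ s → ContinuousAt g₂ s)
    (hA : ∀ s, 0 ≤ s → |g₁ s| ≤ A) (hB : ∀ s, 0 ≤ s → |s * g₂ s| ≤ B) :
    ContDiff ℝ 2 (fun z : E => G (‖z‖ ^ 2)) ∧
      ∀ z : E, ‖iteratedFDeriv ℝ 2 (fun z : E => G (‖z‖ ^ 2)) z‖ ≤ 2 * A + 4 * B := by
  -- `innerSL` is typed as conjugate-linear; over `ℝ` it is a bilinear form.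
  obtain ⟨L, hL⟩ : ∃ L : E →L[ℝ] E →L[ℝ] ℝ, ∀ x, L x = innerSL ℝ x :=
    ⟨innerSL ℝ, fun _ => rfl⟩
  have d₁ : ∀ z : E, HasFDerivAt (fun z : E => G (‖z‖ ^ 2))
      ((2 * g₁ (‖z‖ ^ 2)) • L z) z := by
    intro z
    have := (h₁ (‖z‖ ^ 2) (by positivity)).comp_hasFDerivAt z
      (hasStrictFDerivAt_norm_sq z).hasFDerivAt
    refine this.congr_fderiv ?_
    ext k
    simp [hL]
    ring
  have e₁ : fderiv ℝ (fun z : E => G (‖z‖ ^ 2)) =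
      fun z => (2 * g₁ (‖z‖ ^ 2)) • L z := funext fun z => (d₁ z).fderiv
  have d₂ : ∀ z : E, HasFDerivAt (fun z : E => (2 * g₁ (‖z‖ ^ 2)) • L z)
      ((2 * g₁ (‖z‖ ^ 2)) • L +
        (4 * g₂ (‖z‖ ^ 2)) • (L z).smulRight (L z)) z := by
    intro z
    have h := ((h₂ (‖z‖ ^ 2) (by positivity)).comp_hasFDerivAt z
      (hasStrictFDerivAt_norm_sq z).hasFDerivAt).const_mul 2
    have := h.smul L.hasFDerivAt
    refine this.congr_fderiv ?_
    ext k l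
    simp [hL]
    ring
  have e₂ : fderiv ℝ (fun z : E => (2 * g₁ (‖z‖ ^ 2)) • L z) =
      fun z => (2 * g₁ (‖z‖ ^ 2)) • L +
        (4 * g₂ (‖z‖ ^ 2)) • (L z).smulRight (L z) :=
    funext fun z => (d₂ z).fderiv
  have c₁ : Continuous fun z : E => g₁ (‖z‖ ^ 2) := continuous_iff_continuousAt.2 fun z =>
    ContinuousAt.comp (f := fun z : E => ‖z‖ ^ 2) (h₂ _ (by positivity)).continuousAt
      (by fun_prop)
  have c₂ : Continuous fun z : E => g₂ (‖z‖ ^ 2) := continuous_iff_continuousAt.2 fun z =>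
    ContinuousAt.comp (f := fun z : E => ‖z‖ ^ 2) (hc _ (by positivity)) (by fun_prop)
  constructor
  · rw [show (2 : WithTop ℕ∞) = 1 + 1 by norm_num, contDiff_succ_iff_fderiv, e₁,
      contDiff_one_iff_fderiv, e₂]
    refine ⟨fun z => (d₁ z).differentiableAt, by simp, fun z => (d₂ z).differentiableAt, ?_⟩
    have : Continuous fun z : E => (L z).smulRight (L z) :=
      ((ContinuousLinearMap.smulRightL ℝ E (E →L[ℝ] ℝ)).continuous.comp
        L.continuous).clm_apply L.continuous
    exact ((continuous_const.mul c₁).smul continuous_const).add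
      ((continuous_const.mul c₂).smul this)
  · intro z
    rw [← norm_iteratedFDeriv_fderiv (n := 1), e₁,
      norm_iteratedFDeriv_one, e₂]
    refine (norm_add_le _ _).trans (add_le_add ?_ ?_)
    · rw [norm_smul, norm_mul, Real.norm_eq_abs, Real.norm_eq_abs, abs_two]
      have := hA (‖z‖ ^ 2) (by positivity)
      have h1 : ‖L‖ ≤ 1 := L.opNorm_le_bound zero_le_one fun x => by
        rw [hL, innerSL_apply_norm, one_mul]
      calc _ ≤ 2 * |g₁ (‖z‖ ^ 2)| * 1 := by gcongr
        _ ≤ _ := by linarith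
    · rw [norm_smul, ContinuousLinearMap.norm_smulRight_apply, hL, innerSL_apply_norm]
      have := hB (‖z‖ ^ 2) (by positivity)
      rw [abs_mul, abs_of_nonneg (by positivity : 0 ≤ ‖z‖ ^ 2)] at this
      rw [norm_mul, Real.norm_eq_abs, Real.norm_eq_abs, abs_of_pos (by norm_num : (0:ℝ) < 4)]
      nlinarith

theorem hasDerivAt_max_zero_pow (n : ℕ) (t : ℝ) :
    HasDerivAt (fun t : ℝ => max t 0 ^ (n + 2)) ((n + 2) * max t 0 ^ (n + 1)) t := by
  rcases lt_trichotomy t 0 with h | h | h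
  · have : (fun t : ℝ => max t 0 ^ (n + 2)) =ᶠ[nhds t] fun _ => 0 := by
      filter_upwards [Iio_mem_nhds h] with u hu
      simp [max_eq_right (Set.mem_Iio.1 hu).le]
    rw [max_eq_right h.le]
    simpa using (hasDerivAt_const t (0 : ℝ)).congr_of_eventuallyEq this
  · subst h
    -- the quotient at the kink is at most `|t| ^ (n + 1)`
    rw [hasDerivAt_iff_isLittleO]
    have hb : (fun t : ℝ => max t 0 ^ (n + 2)) =O[nhds 0] fun t : ℝ => t ^ (n + 2) := by
      refine Asymptotics.IsBigO.of_bound 1 (Filter.Eventually.of_forall fun t => ?_)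
      rw [one_mul, norm_pow, norm_pow]
      gcongr
      rw [Real.norm_eq_abs, Real.norm_eq_abs, abs_of_nonneg (le_max_right _ _)]
      exact max_le (le_abs_self _) (abs_nonneg _)
    have := hb.trans_isLittleO (Asymptotics.isLittleO_pow_id (𝕜 := ℝ) (by omega : 1 < n + 2))
    simpa using this
  · have : (fun t : ℝ => max t 0 ^ (n + 2)) =ᶠ[nhds t] fun t => t ^ (n + 2) := by
      filter_upwards [Ioi_mem_nhds h] with u hu
      simp [max_eq_left (Set.mem_Ioi.1 hu).le]
    rw [max_eq_left h.le]
    simpa using (hasDerivAt_pow (n + 2) t).congr_of_eventuallyEq this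

/-- `m(s) = (√s - c)₊`, the positive part in the variable `s = ‖z‖²`. -/
noncomputable def mfun (c s : ℝ) : ℝ := max (√s - c) 0

theorem mfun_nonneg (c s : ℝ) : 0 ≤ mfun c s := le_max_right _ _

theorem mfun_le (c s : ℝ) (hc : 0 < c) : mfun c s ≤ √s :=
  max_le (by linarith) (Real.sqrt_nonneg _)

theorem mfun_eventually_zero (c : ℝ) (hc : 0 < c) : ∀ᶠ s in nhds 0, mfun c s = 0 := by
  have : ∀ᶠ s in nhds (0 : ℝ), √s < c :=
    Real.continuous_sqrt.continuousAt.eventually (Iio_mem_nhds (by simpa using hc))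
  filter_upwards [this] with s hs
  exact max_eq_right (by linarith)

theorem continuous_mfun (c : ℝ) : Continuous (mfun c) := by
  unfold mfun; fun_prop

theorem hasDerivAt_mfun_pow (c : ℝ) (n : ℕ) {s : ℝ} (hs : 0 < s) :
    HasDerivAt (fun s => mfun c s ^ (n + 2)) ((n + 2) * mfun c s ^ (n + 1) * (1 / (2 * √s))) s :=
  HasDerivAt.comp (h₂ := fun t : ℝ => max t 0 ^ (n + 2)) s
    (hasDerivAt_max_zero_pow n (√s - c)) ((Real.hasDerivAt_sqrt hs.ne').sub_const c)

theorem hasDerivAt_quartic (c : ℝ) (hc : 0 < c) (s : ℝ) (hs : 0 ≤ s) :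
    HasDerivAt (fun s => mfun c s ^ 4) (2 * mfun c s ^ 3 / √s) s := by
  rcases hs.eq_or_lt with rfl | hs
  · have : (fun s => mfun c s ^ 4) =ᶠ[nhds 0] fun _ => 0 := by
      filter_upwards [mfun_eventually_zero c hc] with s h
      simp [h]
    simpa using (hasDerivAt_const (0 : ℝ) (0 : ℝ)).congr_of_eventuallyEq this
  · have h := hasDerivAt_mfun_pow c 2 hs
    refine h.congr_deriv ?_
    have : √s ≠ 0 := (Real.sqrt_pos.2 hs).ne'
    push_cast
    field_simp
    ring

theorem hasDerivAt_quartic' (c : ℝ) (hc : 0 < c) (s : ℝ) (hs : 0 ≤ s) :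
    HasDerivAt (fun s => 2 * mfun c s ^ 3 / √s)
      (3 * mfun c s ^ 2 / s - mfun c s ^ 3 / (s * √s)) s := by
  rcases hs.eq_or_lt with rfl | hs
  · have : (fun s => 2 * mfun c s ^ 3 / √s) =ᶠ[nhds 0] fun _ => 0 := by
      filter_upwards [mfun_eventually_zero c hc] with s h
      simp [h]
    simpa using (hasDerivAt_const (0 : ℝ) (0 : ℝ)).congr_of_eventuallyEq this
  · have h0 : √s ≠ 0 := (Real.sqrt_pos.2 hs).ne'
    have h := ((hasDerivAt_mfun_pow c 1 hs).const_mul 2).div (Real.hasDerivAt_sqrt hs.ne') h0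
    refine h.congr_deriv ?_
    have hq : s = √s ^ 2 := (Real.sq_sqrt hs.le).symm
    set r := √s
    rw [hq]
    push_cast
    field_simp
    ring

theorem continuousAt_quartic'' (c : ℝ) (hc : 0 < c) (s : ℝ) (hs : 0 ≤ s) :
    ContinuousAt (fun s => 3 * mfun c s ^ 2 / s - mfun c s ^ 3 / (s * √s)) s := by
  rcases hs.eq_or_lt with rfl | hs
  · have : (fun s => 3 * mfun c s ^ 2 / s - mfun c s ^ 3 / (s * √s)) =ᶠ[nhds 0]
        fun _ => (0 : ℝ) := by
      filter_upwards [mfun_eventually_zero c hc] with s h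
      simp [h]
    exact continuousAt_const.congr this.symm
  · have h0 : √s ≠ 0 := (Real.sqrt_pos.2 hs).ne'
    have := (continuous_mfun c).continuousAt (x := s)
    exact (ContinuousAt.div (by fun_prop) continuousAt_id hs.ne').sub
        (ContinuousAt.div (by fun_prop) (by fun_prop) (mul_ne_zero hs.ne' h0))

theorem quartic_le (c : ℝ) (hc : 0 < c) (s : ℝ) (hs : 0 ≤ s) : mfun c s ^ 4 ≤ s ^ 2 := by
  calc mfun c s ^ 4 ≤ √s ^ 4 := pow_le_pow_left₀ (mfun_nonneg c s) (mfun_le c s hc) 4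
    _ = (√s ^ 2) ^ 2 := by ring
    _ = s ^ 2 := by rw [Real.sq_sqrt hs]

theorem quartic'_le (c : ℝ) (hc : 0 < c) (s : ℝ) (hs : 0 ≤ s) :
    2 * mfun c s ^ 3 / √s ≤ 2 * s := by
  rcases hs.eq_or_lt with rfl | hs
  · simp
  · rw [div_le_iff₀ (Real.sqrt_pos.2 hs)]
    have := pow_le_pow_left₀ (mfun_nonneg c s) (mfun_le c s hc) 3
    have h2 : √s ^ 3 = s * √s := by rw [pow_succ, Real.sq_sqrt hs.le]
    nlinarith

theorem abs_quartic''_le (c : ℝ) (hc : 0 < c) (s : ℝ) (hs : 0 ≤ s) :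
    |3 * mfun c s ^ 2 / s - mfun c s ^ 3 / (s * √s)| ≤ 4 := by
  rcases hs.eq_or_lt with rfl | hs
  · simp
  · have hr := Real.sqrt_pos.2 hs
    have a : 3 * mfun c s ^ 2 / s ≤ 3 := by
      rw [div_le_iff₀ hs]
      have := pow_le_pow_left₀ (mfun_nonneg c s) (mfun_le c s hc) 2
      rw [Real.sq_sqrt hs.le] at this
      linarith
    have b : mfun c s ^ 3 / (s * √s) ≤ 1 := by
      rw [div_le_iff₀ (by positivity)]
      have := pow_le_pow_left₀ (mfun_nonneg c s) (mfun_le c s hc) 3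
      have h2 : √s ^ 3 = s * √s := by rw [pow_succ, Real.sq_sqrt hs.le]
      linarith
    have hm := mfun_nonneg c s
    have a' : 0 ≤ 3 * mfun c s ^ 2 / s := by positivity
    have b' : 0 ≤ mfun c s ^ 3 / (s * √s) := by positivity
    rw [abs_le]
    constructor <;> linarith

/-- If `P = O(s²)`, `P' = O(s)` and `P'' = O(1)` on `s ≥ 0`, then the quotient
`g = P / (δ (1 + s))` has `g'` and `s g''` bounded. -/
theorem quotient_bounds (δ s p p₁ p₂ : ℝ) (hδ : 0 < δ) (hs : 0 ≤ s) (hp0 : 0 ≤ p)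
    (hp : p ≤ s ^ 2) (hp₁0 : 0 ≤ p₁) (hp₁ : p₁ ≤ 2 * s) (hp₂ : |p₂| ≤ 4) :
    |p₁ / (δ * (1 + s)) - p / (δ * (1 + s) ^ 2)| ≤ 2 / δ ∧
    |s * (p₂ / (δ * (1 + s)) - 2 * p₁ / (δ * (1 + s) ^ 2) + 2 * p / (δ * (1 + s) ^ 3))|
      ≤ 10 / δ := by
  have h1 : 0 < 1 + s := by linarith
  have hx0 : 0 ≤ s / (1 + s) := by positivity
  have hx1 : s / (1 + s) ≤ 1 := by rw [div_le_one h1]; linarith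
  have k1 : p₁ / (1 + s) ≤ 2 := by rw [div_le_iff₀ h1]; linarith
  have k1' : 0 ≤ p₁ / (1 + s) := by positivity
  have k0 : p / (1 + s) ^ 2 ≤ 1 := by rw [div_le_iff₀ (by positivity)]; nlinarith
  have k0' : 0 ≤ p / (1 + s) ^ 2 := by positivity
  rw [abs_le] at hp₂
  constructor
  · rw [show p₁ / (δ * (1 + s)) - p / (δ * (1 + s) ^ 2) =
      (p₁ / (1 + s) - p / (1 + s) ^ 2) / δ by field_simp, abs_div, abs_of_pos hδ]
    gcongr
    rw [abs_le]
    constructor <;> linarith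
  · rw [show s * (p₂ / (δ * (1 + s)) - 2 * p₁ / (δ * (1 + s) ^ 2) + 2 * p / (δ * (1 + s) ^ 3)) =
      (s / (1 + s) * (p₂ - 2 * (p₁ / (1 + s)) + 2 * (p / (1 + s) ^ 2))) / δ by field_simp,
      abs_div, abs_of_pos hδ, abs_mul, abs_of_nonneg hx0]
    gcongr
    have : |p₂ - 2 * (p₁ / (1 + s)) + 2 * (p / (1 + s) ^ 2)| ≤ 10 := by
      rw [abs_le]
      constructor <;> linarith
    calc _ ≤ 1 * (10 : ℝ) := by gcongr
      _ = 10 := by norm_num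

theorem sqrt_bounds (δ s : ℝ) (hδ : 0 < δ) (hs : 0 ≤ s) :
    1 / (2 * √(δ ^ 2 + s)) ≤ 1 / δ ∧ s * (1 / (4 * ((δ ^ 2 + s) * √(δ ^ 2 + s)))) ≤ 1 / δ := by
  have h : δ ≤ √(δ ^ 2 + s) := Real.le_sqrt_of_sq_le (by linarith)
  have h0 : 0 < δ ^ 2 + s := by positivity
  constructor
  · apply one_div_le_one_div_of_le hδ
    linarith
  · rw [mul_one_div, div_le_div_iff₀ (by positivity) hδ]
    have : s * δ ≤ (δ ^ 2 + s) * √(δ ^ 2 + s) := by gcongr; nlinarith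
    have : 0 ≤ (δ ^ 2 + s) * √(δ ^ 2 + s) := by positivity
    linarith

/-- The claim on an arbitrary real inner product space. -/
theorem hardening_contDiff_two {E : Type*} [NormedAddCommGroup E] [InnerProductSpace ℝ E]
    (δ c₁ c₂ c₃ : ℝ) (hδ : 0 < δ) (hc₁ : 0 < c₁) (hc₂ : 0 < c₂) (hc₃ : 0 < c₃)
    (H : E → ℝ)
    (hH : ∀ z : E, H z = c₁ * Real.sqrt (δ ^ 2 + ‖z‖ ^ 2) + c₂ * ‖z‖ ^ 2 +
      (max (‖z‖ - c₃) 0) ^ 4 / (δ * (1 + ‖z‖ ^ 2))) :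
    ContDiff ℝ 2 H ∧ ∃ C > 0, ∀ z : E, ‖iteratedFDeriv ℝ 2 H z‖ ≤ C := by
  let P : ℝ → ℝ := fun s => mfun c₃ s ^ 4
  let P₁ : ℝ → ℝ := fun s => 2 * mfun c₃ s ^ 3 / √s
  let P₂ : ℝ → ℝ := fun s => 3 * mfun c₃ s ^ 2 / s - mfun c₃ s ^ 3 / (s * √s)
  let G : ℝ → ℝ := fun s => c₁ * √(δ ^ 2 + s) + c₂ * s + P s / (δ * (1 + s))
  let g₁ : ℝ → ℝ := fun s => c₁ * (1 / (2 * √(δ ^ 2 + s))) + c₂ +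
    (P₁ s / (δ * (1 + s)) - P s / (δ * (1 + s) ^ 2))
  let g₂ : ℝ → ℝ := fun s => -c₁ * (1 / (4 * ((δ ^ 2 + s) * √(δ ^ 2 + s)))) +
    (P₂ s / (δ * (1 + s)) - 2 * P₁ s / (δ * (1 + s) ^ 2) + 2 * P s / (δ * (1 + s) ^ 3))
  have hm := mfun_nonneg c₃
  have hbd := fun s (hs : 0 ≤ s) => quotient_bounds δ s (P s) (P₁ s) (P₂ s) hδ hs
    (by have := hm s; positivity) (quartic_le c₃ hc₃ s hs)
    (by have := hm s; positivity) (quartic'_le c₃ hc₃ s hs) (abs_quartic''_le c₃ hc₃ s hs)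
  have hHG : H = fun z => G (‖z‖ ^ 2) := by
    funext z
    simp only [hH, G, P, mfun, Real.sqrt_sq (norm_nonneg z)]
  have dsq : ∀ s : ℝ, 0 ≤ s →
      HasDerivAt (fun s => √(δ ^ 2 + s)) (1 / (2 * √(δ ^ 2 + s))) s := fun s hs =>
    ((hasDerivAt_id s).const_add (δ ^ 2)).sqrt (by positivity)
  have key := radial_contDiff_two (E := E) G g₁ g₂ (c₁ * (1 / δ) + c₂ + 2 / δ)
    (c₁ * (1 / δ) + 10 / δ) ?_ ?_ ?_ ?_ ?_
  · rw [hHG]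
    exact ⟨key.1, _, by positivity, key.2⟩
  · intro s hs
    have h1 : 1 + s ≠ 0 := by positivity
    have hw : HasDerivAt (fun s => δ * (1 + s)) δ s := by
      simpa using ((hasDerivAt_id s).const_add 1).const_mul δ
    have := (((dsq s hs).const_mul c₁).add ((hasDerivAt_id s).const_mul c₂)).add
      ((hasDerivAt_quartic c₃ hc₃ s hs).div hw (by positivity))
    refine this.congr_deriv ?_
    simp only [g₁, P, P₁]
    generalize 2 * mfun c₃ s ^ 3 / √s = q
    field_simp
  · intro s hs
    have h1 : 1 + s ≠ 0 := by positivity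
    have h0 : 0 < δ ^ 2 + s := by positivity
    have hr : 0 < √(δ ^ 2 + s) := Real.sqrt_pos.2 h0
    have hw : HasDerivAt (fun s => δ * (1 + s)) δ s := by
      simpa using ((hasDerivAt_id s).const_add 1).const_mul δ
    have hw2 : HasDerivAt (fun s => δ * (1 + s) ^ 2) (δ * (2 * (1 + s))) s := by
      simpa using (((hasDerivAt_id s).const_add 1).pow 2).const_mul δ
    have hi : HasDerivAt (fun s => 1 / (2 * √(δ ^ 2 + s)))
        (-(1 / (4 * ((δ ^ 2 + s) * √(δ ^ 2 + s))))) s := by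
      have := (hasDerivAt_const s (1 : ℝ)).div ((dsq s hs).const_mul 2) (by positivity)
      refine this.congr_deriv ?_
      have hq : δ ^ 2 + s = √(δ ^ 2 + s) ^ 2 := (Real.sq_sqrt h0.le).symm
      set r := √(δ ^ 2 + s)
      rw [hq]
      field_simp
      norm_num
    have := ((hi.const_mul c₁).add_const c₂).add
      (((hasDerivAt_quartic' c₃ hc₃ s hs).div hw (by positivity)).sub
        ((hasDerivAt_quartic c₃ hc₃ s hs).div hw2 (by positivity)))
    refine this.congr_deriv ?_
    simp only [g₂, P, P₁, P₂]
    generalize 2 * mfun c₃ s ^ 3 / √s = q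
    generalize 3 * mfun c₃ s ^ 2 / s - mfun c₃ s ^ 3 / (s * √s) = q'
    generalize 1 / (4 * ((δ ^ 2 + s) * √(δ ^ 2 + s))) = a
    field_simp
    ring
  · intro s hs
    have h1 : 1 + s ≠ 0 := by positivity
    have h0 : 0 < δ ^ 2 + s := by positivity
    have hr : 0 < √(δ ^ 2 + s) := Real.sqrt_pos.2 h0
    have q₀ : ContinuousAt P s := (hasDerivAt_quartic c₃ hc₃ s hs).continuousAt
    have q₁ : ContinuousAt P₁ s := (hasDerivAt_quartic' c₃ hc₃ s hs).continuousAt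
    have q₂ : ContinuousAt P₂ s := continuousAt_quartic'' c₃ hc₃ s hs
    have q₃ := (dsq s hs).continuousAt
    have e₁ : ContinuousAt (fun s => 1 / (4 * ((δ ^ 2 + s) * √(δ ^ 2 + s)))) s :=
      continuousAt_const.div (by fun_prop) (by positivity)
    have e₂ : ContinuousAt (fun s => P₂ s / (δ * (1 + s))) s :=
      q₂.div (by fun_prop) (by positivity)
    have e₃ : ContinuousAt (fun s => 2 * P₁ s / (δ * (1 + s) ^ 2)) s :=
      (continuousAt_const.mul q₁).div (by fun_prop) (by positivity)
    have e₄ : ContinuousAt (fun s => 2 * P s / (δ * (1 + s) ^ 3)) s :=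
      (continuousAt_const.mul q₀).div (by fun_prop) (by positivity)
    exact (continuousAt_const.mul e₁).add ((e₂.sub e₃).add e₄)
  · intro s hs
    refine (abs_add_le _ _).trans (add_le_add ?_ (hbd s hs).1)
    rw [abs_of_nonneg (by positivity)]
    have := mul_le_mul_of_nonneg_left (sqrt_bounds δ s hδ hs).1 hc₁.le
    linarith
  · intro s hs
    simp only [g₂]
    rw [mul_add]
    refine (abs_add_le _ _).trans (add_le_add ?_ (hbd s hs).2)
    rw [show s * (-c₁ * (1 / (4 * ((δ ^ 2 + s) * √(δ ^ 2 + s))))) =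
      -(c₁ * (s * (1 / (4 * ((δ ^ 2 + s) * √(δ ^ 2 + s)))))) by ring, abs_neg,
      abs_of_nonneg (by positivity)]
    gcongr
    exact (sqrt_bounds δ s hδ hs).2

theorem frobenius_parallelogram (x y : Matrix (Fin 3) (Fin 3) ℝ) :
    ‖x + y‖ * ‖x + y‖ + ‖x - y‖ * ‖x - y‖ = 2 * (‖x‖ * ‖x‖ + ‖y‖ * ‖y‖) := by
  have h : ∀ a : Matrix (Fin 3) (Fin 3) ℝ, ‖a‖ * ‖a‖ = ∑ i, ∑ j, a i j ^ 2 := by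
    intro a
    rw [Matrix.frobenius_norm_def, ← Real.sqrt_eq_rpow, Real.mul_self_sqrt (by positivity)]
    simp
  simp only [h, Matrix.add_apply, Matrix.sub_apply, Finset.mul_sum, ← Finset.sum_add_distrib]
  refine Finset.sum_congr rfl fun i _ => Finset.sum_congr rfl fun j _ => ?_
  ring

/-- The regularized Souza–Auricchio hardening functional
`H₁^δ(z) = c̄₁ √(δ² + ‖z‖²) + c̄₂‖z‖² + ((‖z‖ − c̄₃)₊)⁴ / (δ(1+‖z‖²))` on deviatoric
symmetric 3×3 matrices is `C²`, satisfies `H₁^δ(z) ≥ c̄₂‖z‖²`, and has uniformly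
bounded second derivative. -/
theorem stmt_15 (δ c₁ c₂ c₃ : ℝ) (hδ : 0 < δ) (hc₁ : 0 < c₁) (hc₂ : 0 < c₂) (hc₃ : 0 < c₃)
    (H : devMat3 → ℝ)
    (hH : ∀ z : devMat3, H z = c₁ * Real.sqrt (δ ^ 2 + ‖z‖ ^ 2) + c₂ * ‖z‖ ^ 2 +
      (max (‖z‖ - c₃) 0) ^ 4 / (δ * (1 + ‖z‖ ^ 2))) :
    ContDiff ℝ 2 H ∧ (∀ z : devMat3, c₂ * ‖z‖ ^ 2 ≤ H z) ∧
      ∃ C > 0, ∀ z : devMat3, ‖iteratedFDeriv ℝ 2 H z‖ ≤ C := by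
  -- The Frobenius norm satisfies the parallelogram law, hence comes from an inner product.
  let _ : InnerProductSpace ℝ devMat3 := InnerProductSpace.ofNorm ℝ fun x y =>
    frobenius_parallelogram x y
  obtain ⟨h₁, h₂⟩ := hardening_contDiff_two δ c₁ c₂ c₃ hδ hc₁ hc₂ hc₃ H hH
  refine ⟨h₁, fun z => ?_, h₂⟩
  rw [hH]
  have : 0 ≤ c₁ * √(δ ^ 2 + ‖z‖ ^ 2) := by positivity
  have : 0 ≤ (max (‖z‖ - c₃) 0) ^ 4 / (δ * (1 + ‖z‖ ^ 2)) := by positivity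
  linarith
end

section
/- Let T > 0, let (Ω, μ) be a measure space, let p̄, q̄ ∈ [1, ∞), let β ∈ [1, β₁], and let ϑ̃ : (0,T) × Ω → ℝ be measurable. Then, with θ(t,x) := ζ(ϑ̃(t,x)), one has (∫₀^T (∫_Ω |θ(t,x)|^{β p̄} dμ(x))^{q̄/p̄} dt)^{1/(β q̄)} ≤ (β₁/c^c)^{1/β} · (∫₀^T (∫_Ω |ϑ̃(t,x)|^{p̄} dμ(x))^{q̄/p̄} dt)^{1/(β q̄)}; that is, ‖θ‖_{L^{β q̄}(0,T; L^{β p̄}(Ω))} ≤ (β₁/c^c)^{1/β} ‖ϑ̃‖_{L^{q̄}(0,T; L^{p̄}(Ω))}^{1/β}. -/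
/-!
The estimate is pointwise. For `θ = ζ ϑ` with `ϑ ≥ 0`, integrating the growth bound on `c` gives
`ϑ = g θ ≥ (cc / β₁) * ((1 + θ) ^ β₁ - 1)`. Since `(1 + θ) ^ β₁ ≥ (1 + θ) ^ β ≥ 1 + θ ^ β`
(monotonicity in the exponent, then superadditivity of `x ↦ x ^ β`), this yields
`θ ^ β ≤ (β₁ / cc) * ϑ`; for `ϑ < 0` the left side vanishes. Raising to the power `p` and
integrating, the constant `β₁ / cc` comes out of the mixed norm with total exponent
`p * (q / p) * (1 / (β * q)) = 1 / β`.
-/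

open MeasureTheory
open scoped ENNReal

/-- Growth of the enthalpy: `θ ^ β` is controlled by the integral of the heat capacity, for every
exponent `β ∈ [1, β₁]`. -/
lemma rpow_le_enthalpy {c : ℝ → ℝ} {cc β₁ β θ : ℝ} (hcc : 0 < cc)
    (hc_cont : ContinuousOn c (Set.Ici 0))
    (hc_growth : ∀ s, 0 ≤ s → cc * (1 + s) ^ (β₁ - 1) ≤ c s)
    (hβ : 1 ≤ β) (hββ₁ : β ≤ β₁) (hθ : 0 ≤ θ) :
    θ ^ β ≤ β₁ / cc * ∫ s in (0:ℝ)..θ, c s := by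
  have hβ₁ : 0 < β₁ := by linarith
  have hint : ∫ s in (0:ℝ)..θ, cc * (1 + s) ^ (β₁ - 1) = cc * (((1 + θ) ^ β₁ - 1) / β₁) := by
    rw [intervalIntegral.integral_const_mul,
      intervalIntegral.integral_comp_add_left (fun x : ℝ => x ^ (β₁ - 1)) 1,
      integral_rpow (Or.inl (by linarith))]
    simp
  have hmono : cc * (((1 + θ) ^ β₁ - 1) / β₁) ≤ ∫ s in (0:ℝ)..θ, c s := by
    rw [← hint]
    refine intervalIntegral.integral_mono_on hθ ?_ ?_ fun s hs => hc_growth s hs.1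
    · refine ContinuousOn.intervalIntegrable fun s _ => ContinuousAt.continuousWithinAt ?_
      exact continuousAt_const.mul
        ((continuousAt_const.add continuousAt_id).rpow_const (Or.inr (by linarith)))
    · refine (hc_cont.mono ?_).intervalIntegrable
      rw [Set.uIcc_of_le hθ]
      exact Set.Icc_subset_Ici_self
  have hsuper : 1 + θ ^ β ≤ (1 + θ) ^ β := by
    simpa using Real.add_rpow_le_rpow_add zero_le_one hθ hβ
  have hexp : (1 + θ) ^ β ≤ (1 + θ) ^ β₁ := Real.rpow_le_rpow_of_exponent_le (by linarith) hββ₁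
  calc θ ^ β ≤ (1 + θ) ^ β₁ - 1 := by linarith
    _ = β₁ / cc * (cc * (((1 + θ) ^ β₁ - 1) / β₁)) := by field_simp
    _ ≤ _ := mul_le_mul_of_nonneg_left hmono (by positivity)

/-- Mixed-norm estimate for `θ = ζ∘ϑ̃`: for `β ∈ [1, β₁]`,
`‖θ‖_{L^{βq̄}(0,T;L^{βp̄}(Ω))} ≤ (β₁/c^c)^{1/β} ‖ϑ̃‖_{L^{q̄}(0,T;L^{p̄}(Ω))}^{1/β}`,
written with explicit iterated (lower Lebesgue) integrals. -/
theorem stmt_16 (c : ℝ → ℝ) (cc β₁ : ℝ) (hcc : 0 < cc) (hβ₁ : 2 ≤ β₁)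
    (hc_cont : ContinuousOn c (Set.Ici 0))
    (hc_growth : ∀ s, 0 ≤ s → cc * (1 + s) ^ (β₁ - 1) ≤ c s)
    (g ζ : ℝ → ℝ) (hg : ∀ θ, g θ = ∫ s in (0:ℝ)..θ, c s)
    (hg_bij : Set.BijOn g (Set.Ici 0) (Set.Ici 0))
    (hζ_nonneg : ∀ ϑ, 0 ≤ ϑ → 0 ≤ ζ ϑ)
    (hζ_inv : ∀ ϑ, 0 ≤ ϑ → g (ζ ϑ) = ϑ)
    (hζ_neg : ∀ ϑ, ϑ < 0 → ζ ϑ = 0)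
    {Ω : Type*} [MeasurableSpace Ω] (μ : Measure Ω)
    (T : ℝ) (hT : 0 < T) (p q β : ℝ) (hp : 1 ≤ p) (hq : 1 ≤ q)
    (hβ : 1 ≤ β) (hββ₁ : β ≤ β₁)
    (ϑ : ℝ → Ω → ℝ) (hmeas : Measurable (Function.uncurry ϑ)) :
    (∫⁻ t in Set.Ioc (0:ℝ) T,
        (∫⁻ x, ENNReal.ofReal (|ζ (ϑ t x)| ^ (β * p)) ∂μ) ^ (q / p)) ^ (1 / (β * q)) ≤
      ENNReal.ofReal ((β₁ / cc) ^ (1 / β)) *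
        (∫⁻ t in Set.Ioc (0:ℝ) T,
          (∫⁻ x, ENNReal.ofReal (|ϑ t x| ^ p) ∂μ) ^ (q / p)) ^ (1 / (β * q)) := by
  have hK : 0 < β₁ / cc := div_pos (by linarith) hcc
  have hβ0 : 0 < β := by linarith
  have hp0 : 0 < p := by linarith
  have hq0 : 0 < q := by linarith
  have hpt : ∀ y, |ζ y| ^ β ≤ β₁ / cc * |y| := by
    intro y
    rcases lt_or_ge y 0 with hy | hy
    · rw [hζ_neg y hy, abs_zero, Real.zero_rpow hβ0.ne']
      positivity
    · have h := rpow_le_enthalpy hcc hc_cont hc_growth hβ hββ₁ (hζ_nonneg y hy)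
      rw [← hg, hζ_inv y hy] at h
      rwa [abs_of_nonneg (hζ_nonneg y hy), abs_of_nonneg hy]
  have hptE : ∀ y, ENNReal.ofReal (|ζ y| ^ (β * p)) ≤
      ENNReal.ofReal (β₁ / cc) ^ p * ENNReal.ofReal (|y| ^ p) := by
    intro y
    rw [ENNReal.ofReal_rpow_of_pos hK, ← ENNReal.ofReal_mul (by positivity),
      Real.rpow_mul (abs_nonneg _), ← Real.mul_rpow hK.le (abs_nonneg _)]
    exact ENNReal.ofReal_le_ofReal (Real.rpow_le_rpow (by positivity) (hpt y) hp0.le)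
  have hin : ∀ t, (∫⁻ x, ENNReal.ofReal (|ζ (ϑ t x)| ^ (β * p)) ∂μ) ^ (q / p) ≤
      ENNReal.ofReal (β₁ / cc) ^ q * (∫⁻ x, ENNReal.ofReal (|ϑ t x| ^ p) ∂μ) ^ (q / p) := by
    intro t
    have h : ∫⁻ x, ENNReal.ofReal (|ζ (ϑ t x)| ^ (β * p)) ∂μ ≤
        ENNReal.ofReal (β₁ / cc) ^ p * ∫⁻ x, ENNReal.ofReal (|ϑ t x| ^ p) ∂μ := by
      rw [← lintegral_const_mul' _ _ (ENNReal.rpow_ne_top_of_nonneg hp0.le ENNReal.ofReal_ne_top)]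
      exact lintegral_mono fun x => hptE _
    refine (ENNReal.rpow_le_rpow h (by positivity)).trans_eq ?_
    rw [ENNReal.mul_rpow_of_nonneg _ _ (by positivity), ← ENNReal.rpow_mul,
      mul_div_cancel₀ _ hp0.ne']
  have hout := lintegral_mono (μ := volume.restrict (Set.Ioc (0:ℝ) T)) hin
  rw [lintegral_const_mul' _ _ (ENNReal.rpow_ne_top_of_nonneg hq0.le ENNReal.ofReal_ne_top)] at hout
  refine (ENNReal.rpow_le_rpow hout (by positivity)).trans_eq ?_
  rw [ENNReal.mul_rpow_of_nonneg _ _ (by positivity), ← ENNReal.rpow_mul,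
    ← ENNReal.ofReal_rpow_of_pos hK]
  congr 2
  field_simp
end
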